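/- Let α_1, α_2 > 0 with α_1 + α_2 = n, let A_1, A_2 be invertible n×n integer matrices with A_1 − A_2 invertible, and set d = min{|A_1 x − A_2 x| : |x| = 1} and D = max{‖A_1‖, ‖A_2‖} (operator norms). There is a constant C > 0, depending only on n, d and D, such that for every sequence b : ℤ^n → ℝ and every j_0 ∈ ℤ^n \ {0}, letting I_1 = {i : 0 < |i − A_1 j_0| ≤ (d/2)|j_0|}, I_2 = {i : 0 < |i − A_2 j_0| ≤ (d/2)|j_0|}, and I_3 = {i ∈ ℤ^n : |i| < 2√n D |j_0|} ∩ I_1^c ∩ I_2^c, one has Σ_{i ∈ I_3} |b(i)| / (|i − A_1 j_0|^{α_1} |i − A_2 j_0|^{α_2}) ≤ (2/d)^n |j_0|^{-n} Σ_{|i| < 2√n D |j_0|} |b(i)| ≤ C (M b)(j_0). -/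

import Mathlib

open scoped ENNReal BigOperators Classical

noncomputable def eucZ {n : ℕ} (v : Fin n → ℤ) : ℝ :=
  Real.sqrt (∑ k, ((v k : ℝ)) ^ 2)

noncomputable def eucR {n : ℕ} (v : Fin n → ℝ) : ℝ :=
  Real.sqrt (∑ k, (v k) ^ 2)

noncomputable def lpNorm {n : ℕ} (p : ℝ) (b : (Fin n → ℤ) → ℝ) : ℝ≥0∞ :=
  (∑' i : Fin n → ℤ, ENNReal.ofReal |b i| ^ p) ^ (1 / p)

noncomputable def Tfs {n m : ℕ} (al : Fin m → ℝ) (A : Fin m → Matrix (Fin n) (Fin n) ℤ)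
    (b : (Fin n → ℤ) → ℝ) (j : Fin n → ℤ) : ℝ≥0∞ :=
  ∑' i : Fin n → ℤ,
    if ∀ k, i ≠ (A k).mulVec j then
      ENNReal.ofReal (|b i| / ∏ k, eucZ (i - (A k).mulVec j) ^ (al k))
    else 0

noncomputable def Mfr {n : ℕ} (γ : ℝ) (b : (Fin n → ℤ) → ℝ) (j : Fin n → ℤ) : ℝ≥0∞ :=
  ⨆ N : ℕ, ENNReal.ofReal ((2 * (N : ℝ) + 1) ^ (γ - (n : ℝ)) *
    ∑ i ∈ Finset.Icc (fun k => j k - (N : ℤ)) (fun k => j k + (N : ℤ)), |b i|)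

noncomputable def Iop {n : ℕ} (α : ℝ) (b : (Fin n → ℤ) → ℝ) (j : Fin n → ℤ) : ℝ≥0∞ :=
  ∑' i : Fin n → ℤ, if i ≠ j then ENNReal.ofReal (|b i| / eucZ (i - j) ^ ((n : ℝ) - α)) else 0

def IsPAtom {n : ℕ} (p : ℝ) (d : ℕ) (a : (Fin n → ℤ) → ℝ) (i0 : Fin n → ℤ) (N : ℕ) : Prop :=
  (∀ i : Fin n → ℤ, a i ≠ 0 → ∀ t, |i t - i0 t| ≤ (N : ℤ)) ∧
  (∀ i : Fin n → ℤ, |a i| ≤ ((2 * (N : ℝ) + 1) ^ n) ^ (-(1 / p))) ∧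
  (∀ β : Fin n → ℕ, (∑ t, β t) ≤ d →
    ∑ i ∈ Finset.Icc (fun t => i0 t - (N : ℤ)) (fun t => i0 t + (N : ℤ)),
      (∏ t, ((i t : ℝ)) ^ (β t)) * a i = 0)

/-!
Off the balls of radius `r = (d / 2) |j₀|` around the two centers, every distance that does not
vanish exceeds `r`, so the kernel is at most `r ^ (-(α₁ + α₂)) = r ^ (-n)`; this is the first
inequality. For the second, the ball of radius `R = 2 √n D |j₀|` around the origin lies in a cube
centered at `j₀` of side at most `2 (R + |j₀|) + 3`. Since `|j₀| ≥ 1` on nonzero lattice points,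
this side is at most `(4 √n D + 5) |j₀|`, so the factor `|j₀| ^ (-n)` is, up to a constant, the
normalization of the average over that cube.
-/

section EuclideanLength

variable {n : ℕ}

lemma eucR_eq_norm_toLp (v : Fin n → ℝ) : eucR v = ‖WithLp.toLp 2 v‖ := by
  simp [eucR, EuclideanSpace.norm_eq]

lemma eucR_nonneg (v : Fin n → ℝ) : 0 ≤ eucR v := Real.sqrt_nonneg _

lemma eucR_pos_iff {v : Fin n → ℝ} : 0 < eucR v ↔ v ≠ 0 := by
  rw [eucR_eq_norm_toLp, norm_pos_iff, Ne, WithLp.toLp_eq_zero]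

lemma eucZ_nonneg (v : Fin n → ℤ) : 0 ≤ eucZ v := Real.sqrt_nonneg _

lemma abs_apply_le_eucZ (v : Fin n → ℤ) (k : Fin n) : |(v k : ℝ)| ≤ eucZ v :=
  (PiLp.norm_apply_le (WithLp.toLp 2 fun k ↦ (v k : ℝ)) k).trans_eq (eucR_eq_norm_toLp _).symm

lemma one_le_eucZ {v : Fin n → ℤ} (hv : v ≠ 0) : 1 ≤ eucZ v := by
  obtain ⟨k, hk⟩ := Function.ne_iff.mp hv
  exact le_trans (mod_cast Int.one_le_abs hk) (abs_apply_le_eucZ v k)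

end EuclideanLength

section IntegerMatrices

lemma map_intCast_mulVec_ne_zero {m R : Type*} [Fintype m] [DecidableEq m] [CommRing R]
    [NoZeroDivisors R] [CharZero R] {A : Matrix m m ℤ} (hA : A.det ≠ 0) {x : m → R} (hx : x ≠ 0) :
    (A.map (Int.cast : ℤ → R)).mulVec x ≠ 0 := by
  have hdet : (A.map (Int.cast : ℤ → R)).det ≠ 0 := by
    rw [← Int.cast_det]
    exact Int.cast_ne_zero.mpr hA
  exact fun h ↦ hx (Matrix.eq_zero_of_mulVec_eq_zero hdet h)

lemma eucR_mulVec_sub_mulVec_pos {n : ℕ} {A B : Matrix (Fin n) (Fin n) ℤ}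
    (hAB : (A - B).det ≠ 0) {x : Fin n → ℝ} (hx : x ≠ 0) :
    0 < eucR ((A.map (Int.cast : ℤ → ℝ)).mulVec x - (B.map (Int.cast : ℤ → ℝ)).mulVec x) := by
  rw [eucR_pos_iff, ← Matrix.sub_mulVec, ← Matrix.map_sub _ Int.cast_sub]
  exact map_intCast_mulVec_ne_zero hAB hx

end IntegerMatrices

section Kernel

variable {ι : Type*} [Fintype ι] {α : ι → ℝ} {r : ℝ}

lemma rpow_sum_le_prod_rpow (hα : ∀ k, 0 ≤ α k) (hr : 0 < r) {t : ι → ℝ} (ht : ∀ k, r ≤ t k) :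
    r ^ ∑ k, α k ≤ ∏ k, t k ^ α k := by
  rw [Real.rpow_sum_of_pos hr]
  exact Finset.prod_le_prod (fun k _ ↦ Real.rpow_nonneg hr.le _)
    fun k _ ↦ Real.rpow_le_rpow hr.le (ht k) (hα k)

-- If some `t k` vanishes, the left-hand side is `0` because `x / 0 = 0`.
lemma div_prod_rpow_le (hα : ∀ k, 0 < α k) (hr : 0 < r) {t : ι → ℝ}
    (ht : ∀ k, t k = 0 ∨ r ≤ t k) {x : ℝ} (hx : 0 ≤ x) :
    x / ∏ k, t k ^ α k ≤ r ^ (-∑ k, α k) * x := by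
  by_cases h : ∃ k, t k = 0
  · obtain ⟨k, hk⟩ := h
    have hprod : ∏ k, t k ^ α k = 0 :=
      Finset.prod_eq_zero (Finset.mem_univ k) (by rw [hk, Real.zero_rpow (hα k).ne'])
    rw [hprod, div_zero]
    positivity
  · have hrt : ∀ k, r ≤ t k := fun k ↦ (ht k).resolve_left fun hk ↦ h ⟨k, hk⟩
    calc x / ∏ k, t k ^ α k ≤ x / r ^ ∑ k, α k :=
          div_le_div_of_nonneg_left hx (by positivity)
            (rpow_sum_le_prod_rpow (fun k ↦ (hα k).le) hr hrt)
      _ = r ^ (-∑ k, α k) * x := by rw [Real.rpow_neg hr.le, div_eq_inv_mul]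

lemma tsum_ball_off_balls_le {n : ℕ} (hα : ∀ k, 0 < α k) (hr : 0 < r) (c : ι → Fin n → ℤ)
    (b : (Fin n → ℤ) → ℝ) (R : ℝ) :
    (∑' i : Fin n → ℤ,
        if eucZ i < R ∧ ∀ k, ¬(0 < eucZ (i - c k) ∧ eucZ (i - c k) ≤ r) then
          ENNReal.ofReal (|b i| / ∏ k, eucZ (i - c k) ^ α k)
        else 0)
      ≤ ENNReal.ofReal (r ^ (-∑ k, α k)) *
          ∑' i : Fin n → ℤ, if eucZ i < R then ENNReal.ofReal |b i| else 0 := by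
  rw [← ENNReal.tsum_mul_left]
  refine ENNReal.tsum_le_tsum fun i ↦ ?_
  split_ifs with hoff hR hR
  · have hdist : ∀ k, eucZ (i - c k) = 0 ∨ r ≤ eucZ (i - c k) := fun k ↦
      (eucZ_nonneg (i - c k)).eq_or_lt.imp Eq.symm
        fun hpos ↦ (not_le.mp fun hle ↦ hoff.2 k ⟨hpos, hle⟩).le
    rw [← ENNReal.ofReal_mul (by positivity)]
    exact ENNReal.ofReal_le_ofReal (div_prod_rpow_le hα hr hdist (abs_nonneg _))
  · exact absurd hoff.1 hR
  all_goals exact zero_le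

end Kernel

section MaximalSequence

variable {n : ℕ}

/-- The discrete cube of side `2 N + 1` centered at `j`, that is the ball `|i - j|_∞ ≤ N` over which
the maximal sequence averages; it is written as in `Mfr`, so that the two agree definitionally. -/
noncomputable def discreteCube (j : Fin n → ℤ) (N : ℕ) : Finset (Fin n → ℤ) :=
  Finset.Icc (fun k ↦ j k - (N : ℤ)) (fun k ↦ j k + (N : ℤ))

lemma mem_discreteCube_of_eucZ_add_le {i j : Fin n → ℤ} {N : ℕ} (h : eucZ i + eucZ j ≤ N) :
    i ∈ discreteCube j N := by
  have hdist (k : Fin n) : |i k - j k| ≤ (N : ℤ) := by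
    have hreal : |(i k : ℝ) - j k| ≤ N :=
      (abs_sub _ _).trans
        ((add_le_add (abs_apply_le_eucZ i k) (abs_apply_le_eucZ j k)).trans h)
    exact_mod_cast hreal
  refine Finset.mem_Icc.mpr ⟨fun k ↦ ?_, fun k ↦ ?_⟩ <;> grind

lemma ofReal_sum_discreteCube_le_Mfr (γ : ℝ) (b : (Fin n → ℤ) → ℝ) (j : Fin n → ℤ) (N : ℕ) :
    ENNReal.ofReal (∑ i ∈ discreteCube j N, |b i|)
      ≤ ENNReal.ofReal ((2 * N + 1) ^ (n - γ)) * Mfr γ b j := by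
  have hN : (0 : ℝ) < 2 * N + 1 := by positivity
  calc ENNReal.ofReal (∑ i ∈ discreteCube j N, |b i|)
      = ENNReal.ofReal ((2 * N + 1) ^ (n - γ)) *
          ENNReal.ofReal ((2 * N + 1) ^ (γ - n) * ∑ i ∈ discreteCube j N, |b i|) := by
        rw [← ENNReal.ofReal_mul (by positivity), ← mul_assoc, ← Real.rpow_add hN]
        simp
    _ ≤ ENNReal.ofReal ((2 * N + 1) ^ (n - γ)) * Mfr γ b j := by
        gcongr
        exact le_iSup (fun N : ℕ ↦ ENNReal.ofReal ((2 * (N : ℝ) + 1) ^ (γ - n) *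
          ∑ i ∈ discreteCube j N, |b i|)) N

lemma tsum_ball_le_sum_discreteCube (b : (Fin n → ℤ) → ℝ) {j : Fin n → ℤ} {R : ℝ} {N : ℕ}
    (hN : R + eucZ j ≤ N) :
    (∑' i : Fin n → ℤ, if eucZ i < R then ENNReal.ofReal |b i| else 0)
      ≤ ENNReal.ofReal (∑ i ∈ discreteCube j N, |b i|) := by
  have hmem {i : Fin n → ℤ} (hi : eucZ i < R) : i ∈ discreteCube j N :=
    mem_discreteCube_of_eucZ_add_le (by linarith)
  rw [tsum_eq_sum fun i hi ↦ if_neg fun h ↦ hi (hmem h),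
    ENNReal.ofReal_sum_of_nonneg fun i _ ↦ abs_nonneg _]
  refine Finset.sum_le_sum fun i _ ↦ ?_
  split_ifs
  exacts [le_rfl, zero_le]

lemma tsum_ball_le_Mfr {γ : ℝ} (hγ : γ ≤ n) (b : (Fin n → ℤ) → ℝ) (j : Fin n → ℤ) {R : ℝ}
    (hR : 0 ≤ R) :
    (∑' i : Fin n → ℤ, if eucZ i < R then ENNReal.ofReal |b i| else 0)
      ≤ ENNReal.ofReal ((2 * (R + eucZ j) + 3) ^ (n - γ)) * Mfr γ b j := by
  set N : ℕ := ⌈R + eucZ j⌉₊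
  have hside : 2 * (N : ℝ) + 1 ≤ 2 * (R + eucZ j) + 3 := by
    linarith [Nat.ceil_lt_add_one (add_nonneg hR (eucZ_nonneg j))]
  calc _ ≤ ENNReal.ofReal (∑ i ∈ discreteCube j N, |b i|) :=
        tsum_ball_le_sum_discreteCube b (Nat.le_ceil _)
    _ ≤ ENNReal.ofReal ((2 * N + 1) ^ (n - γ)) * Mfr γ b j :=
        ofReal_sum_discreteCube_le_Mfr γ b j N
    _ ≤ ENNReal.ofReal ((2 * (R + eucZ j) + 3) ^ (n - γ)) * Mfr γ b j := by
        gcongr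

lemma eucZ_rpow_mul_tsum_ball_le_Mfr {γ : ℝ} (hγ : γ ≤ n) (b : (Fin n → ℤ) → ℝ) {j : Fin n → ℤ}
    (hj : j ≠ 0) {ρ : ℝ} (hρ : 0 ≤ ρ) :
    ENNReal.ofReal (eucZ j ^ (γ - n)) *
        (∑' i : Fin n → ℤ, if eucZ i < ρ * eucZ j then ENNReal.ofReal |b i| else 0)
      ≤ ENNReal.ofReal ((2 * ρ + 5) ^ (n - γ)) * Mfr γ b j := by
  have hj1 : 1 ≤ eucZ j := one_le_eucZ hj
  have hj0 : 0 < eucZ j := one_pos.trans_le hj1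
  have hside : 2 * (ρ * eucZ j + eucZ j) + 3 ≤ (2 * ρ + 5) * eucZ j := by linarith
  have hscale : eucZ j ^ (γ - n) * (2 * (ρ * eucZ j + eucZ j) + 3) ^ (n - γ)
      ≤ (2 * ρ + 5) ^ (n - γ) :=
    calc eucZ j ^ (γ - n) * (2 * (ρ * eucZ j + eucZ j) + 3) ^ (n - γ)
        ≤ eucZ j ^ (γ - n) * ((2 * ρ + 5) * eucZ j) ^ (n - γ) := by
          gcongr
      _ = (2 * ρ + 5) ^ (n - γ) * eucZ j ^ ((γ - n) + (n - γ)) := by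
          rw [Real.mul_rpow (by positivity) hj0.le, Real.rpow_add hj0]
          ring
      _ = (2 * ρ + 5) ^ (n - γ) := by simp
  calc _ ≤ ENNReal.ofReal (eucZ j ^ (γ - n)) *
        (ENNReal.ofReal ((2 * (ρ * eucZ j + eucZ j) + 3) ^ (n - γ)) * Mfr γ b j) := by
        gcongr
        exact tsum_ball_le_Mfr hγ b j (by positivity)
    _ ≤ ENNReal.ofReal ((2 * ρ + 5) ^ (n - γ)) * Mfr γ b j := by
        rw [← mul_assoc, ← ENNReal.ofReal_mul (by positivity)]
        gcongr

end MaximalSequence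

theorem stmt5_general {n : ℕ} {ι : Type*} [Fintype ι] {α : ι → ℝ} (hα : ∀ k, 0 < α k)
    (hsum : ∑ k, α k = n) (c : ι → Fin n → ℤ) {d D : ℝ} (hd : 0 < d) (hD : 0 ≤ D)
    (b : (Fin n → ℤ) → ℝ) {j0 : Fin n → ℤ} (hj0 : j0 ≠ 0) :
    (∑' i : Fin n → ℤ,
        if eucZ i < 2 * Real.sqrt n * D * eucZ j0 ∧
            ∀ k, ¬(0 < eucZ (i - c k) ∧ eucZ (i - c k) ≤ d / 2 * eucZ j0) then
          ENNReal.ofReal (|b i| / ∏ k, eucZ (i - c k) ^ α k)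
        else 0)
      ≤ ENNReal.ofReal ((2 / d) ^ n * eucZ j0 ^ (-(n : ℝ))) *
          (∑' i : Fin n → ℤ,
            if eucZ i < 2 * Real.sqrt n * D * eucZ j0 then ENNReal.ofReal |b i| else 0) ∧
    ENNReal.ofReal ((2 / d) ^ n * eucZ j0 ^ (-(n : ℝ))) *
          (∑' i : Fin n → ℤ,
            if eucZ i < 2 * Real.sqrt n * D * eucZ j0 then ENNReal.ofReal |b i| else 0)
      ≤ ENNReal.ofReal ((2 / d) ^ n * (4 * Real.sqrt n * D + 5) ^ n) * Mfr 0 b j0 := by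
  have hj : 0 < eucZ j0 := one_pos.trans_le (one_le_eucZ hj0)
  constructor
  · have hconst : (d / 2 * eucZ j0) ^ (-∑ k, α k) = (2 / d) ^ n * eucZ j0 ^ (-(n : ℝ)) := by
      rw [hsum, Real.mul_rpow (by positivity) hj.le, Real.rpow_neg (by positivity),
        Real.rpow_natCast, ← inv_pow, inv_div]
    rw [← hconst]
    exact tsum_ball_off_balls_le hα (by positivity) c b _
  · have hρ : 2 * (2 * Real.sqrt n * D) = 4 * Real.sqrt n * D := by ring
    have hmax := eucZ_rpow_mul_tsum_ball_le_Mfr n.cast_nonneg b hj0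
      (ρ := 2 * Real.sqrt n * D) (by positivity)
    rw [zero_sub, sub_zero, Real.rpow_natCast, hρ] at hmax
    have hK : 0 ≤ (2 / d) ^ n := by positivity
    rw [ENNReal.ofReal_mul hK, ENNReal.ofReal_mul hK, mul_assoc (ENNReal.ofReal ((2 / d) ^ n)),
      mul_assoc (ENNReal.ofReal ((2 / d) ^ n))]
    exact mul_le_mul_right hmax _

theorem stmt5 (n : ℕ) (hn : 1 ≤ n) (α1 α2 : ℝ) (h1 : 0 < α1) (h2 : 0 < α2)
    (hsum : α1 + α2 = n)
    (A1 A2 : Matrix (Fin n) (Fin n) ℤ) (hA1 : A1.det ≠ 0) (hA2 : A2.det ≠ 0)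
    (hA12 : (A1 - A2).det ≠ 0)
    (d D : ℝ)
    (hd : IsLeast {r : ℝ | ∃ x : Fin n → ℝ, eucR x = 1 ∧
        r = eucR ((A1.map (Int.cast : ℤ → ℝ)).mulVec x - (A2.map (Int.cast : ℤ → ℝ)).mulVec x)} d)
    (hD : IsGreatest {r : ℝ | ∃ x : Fin n → ℝ, eucR x = 1 ∧
        (r = eucR ((A1.map (Int.cast : ℤ → ℝ)).mulVec x) ∨
         r = eucR ((A2.map (Int.cast : ℤ → ℝ)).mulVec x))} D) :
    ∃ C : ℝ, 0 < C ∧ ∀ (b : (Fin n → ℤ) → ℝ) (j0 : Fin n → ℤ), j0 ≠ 0 →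
      (∑' i : Fin n → ℤ,
          if eucZ i < 2 * Real.sqrt n * D * eucZ j0 ∧
              ¬(0 < eucZ (i - A1.mulVec j0) ∧ eucZ (i - A1.mulVec j0) ≤ d / 2 * eucZ j0) ∧
              ¬(0 < eucZ (i - A2.mulVec j0) ∧ eucZ (i - A2.mulVec j0) ≤ d / 2 * eucZ j0) then
            ENNReal.ofReal
              (|b i| / (eucZ (i - A1.mulVec j0) ^ α1 * eucZ (i - A2.mulVec j0) ^ α2))
          else 0)
        ≤ ENNReal.ofReal ((2 / d) ^ n * eucZ j0 ^ (-(n : ℝ))) *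
            (∑' i : Fin n → ℤ,
              if eucZ i < 2 * Real.sqrt n * D * eucZ j0 then ENNReal.ofReal |b i| else 0) ∧
      ENNReal.ofReal ((2 / d) ^ n * eucZ j0 ^ (-(n : ℝ))) *
            (∑' i : Fin n → ℤ,
              if eucZ i < 2 * Real.sqrt n * D * eucZ j0 then ENNReal.ofReal |b i| else 0)
          ≤ ENNReal.ofReal C * Mfr 0 b j0 := by
  have hd0 : 0 < d := by
    obtain ⟨⟨x, hx, rfl⟩, -⟩ := hd
    exact eucR_mulVec_sub_mulVec_pos hA12 (eucR_pos_iff.mp (hx ▸ one_pos))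
  have hD0 : 0 ≤ D := by
    obtain ⟨⟨x, -, rfl | rfl⟩, -⟩ := hD <;> exact eucR_nonneg _
  refine ⟨(2 / d) ^ n * (4 * Real.sqrt n * D + 5) ^ n, by positivity, fun b j0 hj0 ↦ ?_⟩
  simpa only [Fin.forall_fin_two, Fin.prod_univ_two, Matrix.cons_val_zero,
    Matrix.cons_val_one] using
    stmt5_general (α := ![α1, α2]) (Fin.forall_fin_two.mpr ⟨h1, h2⟩)
      ((Fin.sum_univ_two _).trans hsum) ![A1.mulVec j0, A2.mulVec j0] hd0 hD0 b hj0
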